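/- If H is a non-empty graph containing no pendant edges, then (1/2)·δ'(H) ≤ lim_{n→∞} rwsat(n, H)/n ≤ δ'(H). -/

import Mathlib

open SimpleGraph

/-- The edge-colored graph `(G, c)` contains a rainbow copy of `H`
passing through the edge `e`. -/
def IsRainbowCopyThrough {W V : Type*} (H : SimpleGraph W) (G : SimpleGraph V)
    (c : Sym2 V → ℕ) (e : Sym2 V) : Prop :=
  ∃ f : W → V, Function.Injective f ∧
    (∀ ⦃a b⦄, H.Adj a b → G.Adj (f a) (f b)) ∧
    (∀ ⦃a b a' b'⦄, H.Adj a b → H.Adj a' b' →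
      c s(f a, f b) = c s(f a', f b') → s(a, b) = s(a', b')) ∧
    ∃ a b, H.Adj a b ∧ e = s(f a, f b)

/-- The edge-colored graph `(G, c)` is weakly `H`-rainbow saturated: there is an
ordering `L` of the non-edges of `G` such that for every list `cs` of pairwise
distinct colors, adding the non-edges one at a time (the `i`-th one in color `cs i`)
always creates a new rainbow copy of `H` through the added edge. -/
def WeaklyRainbowSat {W V : Type*} [DecidableEq V] (H : SimpleGraph W)
    (G : SimpleGraph V) (c : Sym2 V → ℕ) : Prop :=
  ∃ L : List (Sym2 V), L.Nodup ∧ (∀ e, e ∈ L ↔ e ∈ Gᶜ.edgeSet) ∧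
    ∀ cs : List ℕ, cs.length = L.length → cs.Nodup →
      ∀ i : Fin L.length,
        IsRainbowCopyThrough H
          (G ⊔ SimpleGraph.fromEdgeSet {e | e ∈ L.take ((i : ℕ) + 1)})
          (((L.zip cs).take ((i : ℕ) + 1)).foldl
            (fun c' p => Function.update c' p.1 p.2) c)
          (L.get i)

/-- The weak rainbow saturation number `rwsat(n, H)`: the minimum number of edges
in a weakly `H`-rainbow saturated edge-colored graph on `n` vertices, where by
convention the value is `n.choose 2` if no such graph exists. -/
noncomputable def rwsat {W : Type*} (H : SimpleGraph W) (n : ℕ) : ℕ :=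
  sInf ({m | ∃ (G : SimpleGraph (Fin n)) (c : Sym2 (Fin n) → ℕ),
    WeaklyRainbowSat H G c ∧ G.edgeSet.ncard = m} ∪ {n.choose 2})

/-- `δ'(H)`: the minimum degree among vertices of nonzero degree. -/
noncomputable def minPosDeg {W : Type*} (H : SimpleGraph W) : ℕ :=
  sInf {d | ∃ v, (H.neighborSet v).ncard = d ∧ d ≠ 0}

/-- `A` is contained in `B` as a subgraph (there is an injective graph
homomorphism from `A` to `B`). -/
def ContainsCopy {α β : Type*} (A : SimpleGraph α) (B : SimpleGraph β) : Prop :=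
  ∃ f : α → β, Function.Injective f ∧ ∀ ⦃a b⦄, A.Adj a b → B.Adj (f a) (f b)

/-- The Turán number `ex(N, ℋ)` of the family `ℋ = {H - {u, v} : uv ∈ E(H)}`:
the maximum number of edges of an `N`-vertex graph containing no member of `ℋ`. -/
noncomputable def exFam {W : Type*} (H : SimpleGraph W) (N : ℕ) : ℕ :=
  sSup {m | ∃ G : SimpleGraph (Fin N),
    (∀ u v : W, H.Adj u v → ¬ ContainsCopy (H.induce ({u, v}ᶜ : Set W)) G) ∧
    G.edgeSet.ncard = m}

/-- `f(H)`: the smallest `n` such that for each `N ∈ {n-1, n}` one has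
`ex(N, ℋ) ≤ C(N,2) - 2N - 2`. -/
noncomputable def fH {W : Type*} (H : SimpleGraph W) : ℕ :=
  sInf {n | ∀ N ∈ ({n - 1, n} : Set ℕ),
    (exFam H N : ℤ) ≤ (N.choose 2 : ℤ) - 2 * N - 2}

/-- The coloring `c` is rainbow (injective) on the set `S` of edges. -/
def RainbowOn {V : Type*} (c : Sym2 V → ℕ) (S : Set (Sym2 V)) : Prop :=
  ∀ e₁ ∈ S, ∀ e₂ ∈ S, c e₁ = c e₂ → e₁ = e₂

section Helpers

/-- Rank reformulation of weak rainbow saturation. -/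
def RankSat {W V : Type*} (H : SimpleGraph W) (G : SimpleGraph V) (c : Sym2 V → ℕ) : Prop :=
  ∃ r : Sym2 V → ℕ, ∀ χ : Sym2 V → ℕ, (∀ e ∈ G.edgeSet, χ e = c e) →
    Set.InjOn χ Gᶜ.edgeSet → ∀ e ∈ Gᶜ.edgeSet,
      IsRainbowCopyThrough H
        (G ⊔ SimpleGraph.fromEdgeSet {e' | e' ∈ Gᶜ.edgeSet ∧ (r e' < r e ∨ e' = e)}) χ e

theorem copy_mono {W V : Type*} {H : SimpleGraph W} {G G' : SimpleGraph V}
    {c c' : Sym2 V → ℕ} {e : Sym2 V} (hG : G ≤ G') (hc : ∀ e ∈ G.edgeSet, c e = c' e)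
    (h : IsRainbowCopyThrough H G c e) : IsRainbowCopyThrough H G' c' e := by
  obtain ⟨f, hf, h1, h2, h3⟩ := h
  refine ⟨f, hf, fun a b hab => hG (h1 hab), ?_, h3⟩
  intro a b a' b' hab hab' heq
  apply h2 hab hab'
  rw [hc _ (h1 hab), hc _ (h1 hab'), heq]

theorem copy_map {W V V' : Type*} {H : SimpleGraph W} {G : SimpleGraph V}
    {G' : SimpleGraph V'} {c : Sym2 V → ℕ} {c' : Sym2 V' → ℕ} {e : Sym2 V}
    (φ : V → V') (hφ : Function.Injective φ)
    (hG : ∀ a b, G.Adj a b → G'.Adj (φ a) (φ b))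
    (hc : ∀ e ∈ G.edgeSet, c e = c' (e.map φ))
    (h : IsRainbowCopyThrough H G c e) : IsRainbowCopyThrough H G' c' (e.map φ) := by
  obtain ⟨f, hf, h1, h2, a, b, hab, he⟩ := h
  refine ⟨φ ∘ f, hφ.comp hf, fun a b hab => hG _ _ (h1 hab), ?_, a, b, hab, by simp [he]⟩
  intro a b a' b' hab hab' heq
  apply h2 hab hab'
  rw [hc _ (h1 hab), hc _ (h1 hab')]
  simpa using heq

theorem foldl_update {α : Type*} [DecidableEq α] (l : List (α × ℕ)) :
    ∀ (c : α → ℕ), (l.map Prod.fst).Nodup →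
    (∀ p ∈ l, l.foldl (fun c' p => Function.update c' p.1 p.2) c p.1 = p.2) ∧
    (∀ e, e ∉ l.map Prod.fst →
      l.foldl (fun c' p => Function.update c' p.1 p.2) c e = c e) := by
  induction l with
  | nil => intro c _; simp
  | cons q l ih =>
    intro c hnd
    rw [List.map_cons, List.nodup_cons] at hnd
    obtain ⟨h1, h2⟩ := ih (Function.update c q.1 q.2) hnd.2
    refine ⟨?_, ?_⟩
    · intro p hp
      rcases List.mem_cons.1 hp with rfl | hp
      · rw [List.foldl_cons, h2 _ hnd.1]; simp
      · rw [List.foldl_cons, h1 _ hp]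
    · intro e he
      rw [List.map_cons, List.mem_cons, not_or] at he
      rw [List.foldl_cons, h2 _ he.2, Function.update_of_ne he.1]

theorem zip_take_fst {α : Type*} (L : List α) (cs : List ℕ) (h : cs.length = L.length) (k : ℕ) :
    ((L.zip cs).take k).map Prod.fst = L.take k := by
  rw [List.map_take, List.map_fst_zip (by omega)]

theorem wrs_of_rankSat {W V : Type*} [Fintype V] [DecidableEq V] {H : SimpleGraph W}
    {G : SimpleGraph V} {c : Sym2 V → ℕ} (h : RankSat H G c) : WeaklyRainbowSat H G c := by
  classical
  obtain ⟨r, hr⟩ := h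
  let L : List (Sym2 V) := (Gᶜ.edgeFinset.toList).mergeSort (fun a b => decide (r a ≤ r b))
  have hperm : L.Perm Gᶜ.edgeFinset.toList := List.mergeSort_perm _ _
  have hnd : L.Nodup := hperm.nodup_iff.2 (Finset.nodup_toList _)
  have hmem : ∀ e, e ∈ L ↔ e ∈ Gᶜ.edgeSet := by
    intro e; rw [hperm.mem_iff]; simp
  have hsort : L.Pairwise (fun a b => r a ≤ r b) := by
    have := List.pairwise_mergeSort (le := fun a b : Sym2 V => decide (r a ≤ r b))
      (by intro a b c; simp; omega) (by intro a b; simp; omega) Gᶜ.edgeFinset.toList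
    simpa using this
  refine ⟨L, hnd, hmem, ?_⟩
  intro cs hlen hcs i
  set χ := (L.zip cs).foldl (fun c' p => Function.update c' p.1 p.2) c with hχ
  have hfst : (L.zip cs).map Prod.fst = L := List.map_fst_zip (by omega)
  have hsnd : (L.zip cs).map Prod.snd = cs := List.map_snd_zip (by omega)
  obtain ⟨f1, f2⟩ := foldl_update (L.zip cs) c (by rw [hfst]; exact hnd)
  have hfst' := zip_take_fst L cs hlen ((i : ℕ) + 1)
  obtain ⟨g1, g2⟩ := foldl_update ((L.zip cs).take ((i : ℕ) + 1)) c
    (by rw [hfst']; exact hnd.sublist (List.take_sublist _ _))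
  have hGL : ∀ e ∈ G.edgeSet, e ∉ L := by
    intro e he hL
    rw [hmem] at hL
    induction e with | _ a b => simp at he hL; exact hL.2 he
  have hχG : ∀ e ∈ G.edgeSet, χ e = c e := by
    intro e he
    exact f2 e (by rw [hfst]; exact hGL e he)
  have hχinj : Set.InjOn χ Gᶜ.edgeSet := by
    intro e he e' he' heq
    rw [← hmem, ← hfst, List.mem_map] at he he'
    obtain ⟨p, hp, rfl⟩ := he
    obtain ⟨p', hp', rfl⟩ := he'
    rw [hχ, f1 p hp, f1 p' hp'] at heq
    rw [List.inj_on_of_nodup_map (f := Prod.snd) (by rw [hsnd]; exact hcs) hp hp' heq]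
  have hLi : L.get i ∈ Gᶜ.edgeSet := (hmem _).1 (List.get_mem _ _)
  refine copy_mono ?_ ?_ (copy_mono (G' := G ⊔ SimpleGraph.fromEdgeSet {e | e ∈ L.take ((i : ℕ) + 1)}) (c' := χ) ?_ (fun _ _ => rfl) (hr χ hχG hχinj _ hLi))
  · exact le_rfl
  · intro e he
    by_cases heG : e ∈ G.edgeSet
    · rw [hχG e heG]
      symm
      apply g2
      rw [hfst']
      exact fun h => hGL e heG (List.mem_of_mem_take h)
    · have : e ∈ L.take ((i : ℕ) + 1) := by
        simp only [SimpleGraph.edgeSet_sup, Set.mem_union, SimpleGraph.edgeSet_fromEdgeSet] at he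
        rcases he with he | he
        · exact absurd he heG
        · exact he.1
      rw [← hfst', List.mem_map] at this
      obtain ⟨p, hp, rfl⟩ := this
      rw [g1 p hp]
      exact f1 p (List.mem_of_mem_take hp)
  · apply sup_le_sup le_rfl
    apply SimpleGraph.fromEdgeSet_mono
    rintro e ⟨he, hlt⟩
    rcases hlt with hlt | rfl
    · rw [← hmem] at he
      obtain ⟨j, hj, rfl⟩ := List.getElem_of_mem he
      have : j < i := by
        by_contra hcon
        rcases Nat.lt_or_eq_of_le (not_lt.1 hcon) with h | h
        · have := List.pairwise_iff_getElem.1 hsort i j i.2 hj h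
          simp at hlt
          omega
        · subst h; simp at hlt
      show L[j] ∈ L.take (i+1)
      rw [List.mem_take_iff_getElem]
      exact ⟨j, by omega, rfl⟩
    · show L.get i ∈ L.take (i+1)
      rw [List.mem_take_iff_getElem]
      exact ⟨i, by have := i.2; omega, by simp⟩

theorem rankSat_of_wrs {W V : Type*} [DecidableEq V] {H : SimpleGraph W}
    {G : SimpleGraph V} {c : Sym2 V → ℕ} (h : WeaklyRainbowSat H G c) : RankSat H G c := by
  obtain ⟨L, hnd, hmem, h⟩ := h
  refine ⟨fun e => L.idxOf e, ?_⟩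
  intro χ hχ hinj e he
  have heL := (hmem e).2 he
  have hi : L.idxOf e < L.length := List.idxOf_lt_length_iff.2 heL
  have hget : L[L.idxOf e] = e := List.getElem_idxOf hi
  have key := h (L.map χ) (by simp)
    (hnd.map_on (fun x hx y hy => hinj ((hmem x).1 hx) ((hmem y).1 hy))) ⟨L.idxOf e, hi⟩
  have hfst' := zip_take_fst L (L.map χ) (by simp) (L.idxOf e + 1)
  obtain ⟨g1, g2⟩ := foldl_update ((L.zip (L.map χ)).take (L.idxOf e + 1)) c
    (by rw [hfst']; exact hnd.sublist (List.take_sublist _ _))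
  have hzip : ∀ p ∈ L.zip (L.map χ), p.2 = χ p.1 := by
    intro p hp
    obtain ⟨j, hj, rfl⟩ := List.getElem_of_mem hp
    simp
  have hGL : ∀ e ∈ G.edgeSet, e ∉ L := by
    intro e he hL
    rw [hmem] at hL
    induction e with | _ a b => simp at he hL; exact hL.2 he
  simp only [List.get_eq_getElem, hget] at key
  refine copy_mono ?_ ?_ key
  · apply sup_le_sup le_rfl
    apply SimpleGraph.fromEdgeSet_mono
    intro e' he'
    have he' : e' ∈ L.take (L.idxOf e + 1) := he'
    refine ⟨(hmem _).1 (List.mem_of_mem_take he'), ?_⟩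
    rw [List.mem_take_iff_getElem] at he'
    obtain ⟨j, hj, rfl⟩ := he'
    show L.idxOf L[j] < L.idxOf e ∨ L[j] = e
    rw [hnd.idxOf_getElem]
    by_cases hje : j = L.idxOf e
    · right; subst hje; exact hget
    · left; omega
  · intro e' he'
    by_cases heG : e' ∈ G.edgeSet
    · rw [hχ e' heG]
      apply g2
      rw [hfst']
      exact fun h => hGL e' heG (List.mem_of_mem_take h)
    · have : e' ∈ L.take (L.idxOf e + 1) := by
        simp only [SimpleGraph.edgeSet_sup, Set.mem_union, SimpleGraph.edgeSet_fromEdgeSet] at he'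
        rcases he' with he | he
        · exact absurd he heG
        · exact he.1
      rw [← hfst', List.mem_map] at this
      obtain ⟨p, hp, rfl⟩ := this
      rw [g1 p hp]
      exact hzip p (List.mem_of_mem_take hp)

theorem rwsat_attained {W : Type*} (H : SimpleGraph W) (n : ℕ) :
    ∃ (G : SimpleGraph (Fin n)) (c : Sym2 (Fin n) → ℕ), RankSat H G c ∧
      G.edgeSet.ncard = rwsat H n := by
  have hne : ({m | ∃ (G : SimpleGraph (Fin n)) (c : Sym2 (Fin n) → ℕ),
    WeaklyRainbowSat H G c ∧ G.edgeSet.ncard = m} ∪ {n.choose 2}).Nonempty := ⟨_, Or.inr rfl⟩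
  rcases Nat.sInf_mem hne with ⟨G, c, h, hm⟩ | h
  · exact ⟨G, c, rankSat_of_wrs h, hm⟩
  · refine ⟨⊤, fun _ => 0, ⟨fun _ => 0, ?_⟩, ?_⟩
    · intro χ _ _ e he
      simp at he
    · have h : rwsat H n = n.choose 2 := h
      rw [h, Set.ncard_eq_toFinset_card', ← SimpleGraph.edgeFinset,
        SimpleGraph.card_edgeFinset_top_eq_card_choose_two, Fintype.card_fin]

theorem rwsat_le {W V : Type*} [Fintype V] (H : SimpleGraph W) (G : SimpleGraph V)
    (c : Sym2 V → ℕ) (h : RankSat H G c) : rwsat H (Fintype.card V) ≤ G.edgeSet.ncard := by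
  classical
  let φ := Fintype.equivFin V
  apply Nat.sInf_le
  left
  refine ⟨G.map φ.toEmbedding, fun e => c (e.map φ.symm), wrs_of_rankSat ?_, ?_⟩
  · obtain ⟨r, hr⟩ := h
    refine ⟨fun e => r (e.map φ.symm), ?_⟩
    intro χ hχ hinj e he
    have hadj : ∀ a b, (G.map φ.toEmbedding).Adj (φ a) (φ b) ↔ G.Adj a b := by
      intro a b
      exact SimpleGraph.map_adj_apply
    have hE : ∀ e : Sym2 V, e.map φ ∈ (G.map φ.toEmbedding)ᶜ.edgeSet ↔ e ∈ Gᶜ.edgeSet := by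
      intro e
      induction e with | _ a b => simp only [Sym2.map_mk, SimpleGraph.mem_edgeSet, SimpleGraph.compl_adj, hadj, ne_eq, φ.injective.eq_iff]
    have hE' : ∀ e : Sym2 V, e.map φ ∈ (G.map φ.toEmbedding).edgeSet ↔ e ∈ G.edgeSet := by
      intro e
      induction e with | _ a b => simp only [Sym2.map_mk, SimpleGraph.mem_edgeSet, hadj]
    have hinv : ∀ e : Sym2 V, (e.map φ).map φ.symm = e := by
      intro e; rw [Sym2.map_map]; simp
    obtain ⟨e, rfl⟩ : ∃ e0 : Sym2 V, e = e0.map φ := ⟨e.map φ.symm, by rw [Sym2.map_map]; simp⟩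
    have := hr (fun e => χ (e.map φ)) (fun e he => by
      rw [hχ _ ((hE' e).2 he)]; show c _ = _; rw [hinv]) (by
      intro a ha b hb hab
      exact Sym2.map.injective φ.injective (hinj ((hE a).2 ha) ((hE b).2 hb) hab)) e ((hE e).1 he)
    refine copy_map φ φ.injective ?_ (fun _ _ => rfl) this
    intro a b hab
    rw [SimpleGraph.sup_adj, SimpleGraph.fromEdgeSet_adj] at hab ⊢
    rcases hab with hab | ⟨⟨h1, h2⟩, h3⟩
    · exact Or.inl ((hadj _ _).2 hab)
    · refine Or.inr ⟨⟨?_, ?_⟩, fun h => h3 (φ.injective h)⟩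
      · exact (hE s(a,b)).2 h1
      · show r _ < r _ ∨ _
        rw [hinv]
        rcases h2 with h2 | h2
        · left; simpa using h2
        · right; rw [← h2]; rfl
  · rw [SimpleGraph.edgeSet_map]
    exact Set.ncard_image_of_injective _ (Function.Embedding.injective _)

/-- Edges that may be used by the embeddings below. -/
def UsedEdges {V : Type*} (p q : V) (P Q : Finset V) : Set (Sym2 V) :=
  {e | e = s(p, q) ∨ (∃ w ∈ P, e = s(p, w)) ∨ (∃ w, (w ∈ P ∨ w ∈ Q) ∧ e = s(q, w)) ∨
    ∃ w w', (w ∈ P ∨ w ∈ Q) ∧ (w' ∈ P ∨ w' ∈ Q) ∧ w ≠ w' ∧ e = s(w, w')}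

theorem exists_embed {W V : Type*} [Fintype W] (H : SimpleGraph W) {x y : W}
    (hxy : H.Adj x y) {p q : V} (hpq : p ≠ q) (P Q : Finset V) (hPQ : Disjoint P Q)
    (hpP : p ∉ P) (hpQ : p ∉ Q) (hqP : q ∉ P) (hqQ : q ∉ Q)
    (hP : (H.neighborSet x).ncard ≤ P.card + 1) (hQ : Fintype.card W ≤ Q.card) :
    ∃ f : W → V, Function.Injective f ∧ f x = p ∧ f y = q ∧
      (∀ z, z ≠ y → H.Adj x z → f z ∈ P) ∧ (∀ z, z ≠ x → z ≠ y → ¬ H.Adj x z → f z ∈ Q) := by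
  classical
  let A : Set W := H.neighborSet x \ {y}
  have hA : Nat.card A ≤ P.card := by
    have := Set.ncard_sdiff_singleton_of_mem (s := H.neighborSet x) (a := y) hxy
    show (H.neighborSet x \ {y}).ncard ≤ _
    omega
  obtain ⟨g1⟩ : Nonempty (A ↪ P) := by
    apply Function.Embedding.nonempty_of_card_le
    rw [← Nat.card_eq_fintype_card]
    simpa using hA
  obtain ⟨g2⟩ : Nonempty (W ↪ Q) := by
    apply Function.Embedding.nonempty_of_card_le
    simpa using hQ
  have hne : x ≠ y := hxy.ne
  refine ⟨fun z => if z = x then p else if z = y then q else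
    if h : z ∈ A then (g1 ⟨z, h⟩ : V) else (g2 z : V), ?_, by simp, by simp [hne.symm], ?_, ?_⟩
  · have a1 : ∀ z h, (g1 ⟨z, h⟩ : V) ∈ P := fun z h => (g1 ⟨z, h⟩).2
    have a2 : ∀ z, (g2 z : V) ∈ Q := fun z => (g2 z).2
    have a3 : ∀ z z' h h', (g1 ⟨z, h⟩ : V) = g1 ⟨z', h'⟩ → z = z' := by
      intro z z' h h' he
      simpa using g1.injective (Subtype.ext he)
    have a4 : ∀ z z', (g2 z : V) = g2 z' → z = z' := by
      intro z z' he
      exact g2.injective (Subtype.ext he)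
    have a5 : ∀ u v, u ∈ P → v ∈ Q → u ≠ v := fun u v hu hv h =>
      Finset.disjoint_left.1 hPQ hu (h ▸ hv)
    intro z z' h
    simp only at h
    split_ifs at h <;> grind
  · intro z hz hxz
    have h1 : z ≠ x := hxz.ne'
    have h2 : z ∈ A := ⟨hxz, hz⟩
    simp [h1, hz, h2]
  · intro z h1 h2 h3
    have h4 : z ∉ A := fun h => h3 h.1
    simp [h1, h2, h4]

theorem copy_of {W V : Type*} [Fintype W] (H : SimpleGraph W) {x y : W}
    (hxy : H.Adj x y) {p q : V} (hpq : p ≠ q) (P Q : Finset V) (hPQ : Disjoint P Q)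
    (hpP : p ∉ P) (hpQ : p ∉ Q) (hqP : q ∉ P) (hqQ : q ∉ Q)
    (hP : (H.neighborSet x).ncard ≤ P.card + 1) (hQ : Fintype.card W ≤ Q.card)
    (G : SimpleGraph V) (χ : Sym2 V → ℕ) (hG : ∀ e ∈ UsedEdges p q P Q, e ∈ G.edgeSet)
    (hχ : Set.InjOn χ (UsedEdges p q P Q)) :
    IsRainbowCopyThrough H G χ s(p, q) := by
  obtain ⟨f, hf, hfx, hfy, hfP, hfQ⟩ := exists_embed H hxy hpq P Q hPQ hpP hpQ hqP hqQ hP hQ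
  have hPQ' : ∀ z, z ≠ x → z ≠ y → (f z ∈ P ∨ f z ∈ Q) := by
    intro z h1 h2
    by_cases h : H.Adj x z
    · exact Or.inl (hfP z h2 h)
    · exact Or.inr (hfQ z h1 h2 h)
  have hx : ∀ b, H.Adj x b → s(f x, f b) ∈ UsedEdges p q P Q := by
    intro b hb
    by_cases hby : b = y
    · left; rw [hby, hfx, hfy]
    · right; left; exact ⟨f b, hfP b hby hb, by rw [hfx]⟩
  have hy : ∀ b, b ≠ x → H.Adj y b → s(f y, f b) ∈ UsedEdges p q P Q := by
    intro b hbx hb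
    right; right; left
    exact ⟨f b, hPQ' b hbx hb.ne', by rw [hfy]⟩
  have hU : ∀ a b, H.Adj a b → s(f a, f b) ∈ UsedEdges p q P Q := by
    intro a b hab
    by_cases hax : a = x
    · subst hax; exact hx b hab
    by_cases hbx : b = x
    · subst hbx; rw [Sym2.eq_swap]; exact hx a hab.symm
    by_cases hay : a = y
    · subst hay; exact hy b hbx hab
    by_cases hby : b = y
    · subst hby; rw [Sym2.eq_swap]; exact hy a hax hab.symm
    right; right; right
    exact ⟨f a, f b, hPQ' a hax hay, hPQ' b hbx hby, fun h => hab.ne (hf h), rfl⟩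
  refine ⟨f, hf, fun a b hab => hG _ (hU a b hab), ?_, x, y, hxy, by rw [hfx, hfy]⟩
  intro a b a' b' hab hab' heq
  have := hχ (hU _ _ hab) (hU _ _ hab') heq
  exact Sym2.map.injective hf (by simpa using this)

/-- Extending by an edge between a vertex joined to `T` by few colours and another vertex. -/
theorem copy_step {W V : Type*} [Fintype W] (H : SimpleGraph W) {x y : W}
    (hxy : H.Adj x y) (δ : ℕ) [NeZero δ] (hδ : (H.neighborSet x).ncard = δ)
    (G : SimpleGraph V) (χ : Sym2 V → ℕ)
    (N : Set (Sym2 V)) (hN : ∀ e ∈ N, ¬ e.IsDiag) (hinj : Set.InjOn χ N)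
    {p q : V} (hpq : p ≠ q) (T : Finset V) (hpT : p ∉ T) (hqT : q ∉ T)
    (ℓ : V → ZMod δ) (hℓ : ∀ t ∈ T, χ s(p, t) = (ℓ t).val)
    (hbig : ∀ j : ZMod δ, ∃ B ⊆ T, (∀ t ∈ B, ℓ t = j) ∧ δ < B.card)
    (hT : Fintype.card W + 2 * δ ≤ T.card)
    (h1 : s(p, q) ∈ N) (h2 : ∀ t ∈ T, s(q, t) ∈ N) (h3 : ∀ t ∈ T, ∀ t' ∈ T, t ≠ t' → s(t, t') ∈ N)
    (g1 : ∀ e ∈ N, (∀ v ∈ e, v = p ∨ v = q ∨ v ∈ T) → e = s(p, q) ∨ p ∉ e → e ∈ G.edgeSet)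
    (g2 : ∀ t ∈ T, G.Adj p t) :
    IsRainbowCopyThrough H G χ s(p, q) := by
  classical
  -- a vertex blocking the bad edge of colour `k`
  have hz : ∀ k : ZMod δ, ∃ z : V, z ≠ p ∧ z ≠ q ∧ ∀ e ∈ N, e ≠ s(p, q) → χ e = k.val →
      (z ∈ e) ∨ p ∈ e := by
    intro k
    by_cases h : ∃ e ∈ N, e ≠ s(p, q) ∧ χ e = k.val ∧ p ∉ e
    · obtain ⟨e, he, hne, hk, hpe⟩ := h
      induction e with | _ a b =>
      have hab : a ≠ b := by simpa using hN _ he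
      have : ∃ z ∈ s(a, b), z ≠ q := by
        by_cases haq : a = q
        · exact ⟨b, by simp, fun h => hab (haq.trans h.symm)⟩
        · exact ⟨a, by simp, haq⟩
      obtain ⟨z, hz, hzq⟩ := this
      refine ⟨z, fun h => hpe (h ▸ hz), hzq, ?_⟩
      intro e' he' hne' hk'
      rw [hinj he' he (hk'.trans hk.symm)]
      exact Or.inl hz
    · push Not at h
      obtain ⟨B, hB, -, hc⟩ := hbig 0
      obtain ⟨t, ht⟩ := Finset.card_pos.1 (lt_of_le_of_lt (Nat.zero_le _) hc)
      refine ⟨t, fun h => hpT (h ▸ hB ht), fun h => hqT (h ▸ hB ht), ?_⟩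
      intro e he hne hk
      exact Or.inr (h e he hne hk)
  choose z hzp hzq hz using hz
  let Z : Finset V := Finset.univ.image z
  have hZ : Z.card ≤ δ := by
    refine Finset.card_image_le.trans ?_
    rw [Finset.card_univ, ZMod.card]
  have ht : ∀ j : ZMod δ, ∃ t ∈ T, ℓ t = j ∧ t ∉ Z := by
    intro j
    obtain ⟨B, hB, hj, hc⟩ := hbig j
    obtain ⟨t, ht, htZ⟩ := Finset.exists_mem_notMem_of_card_lt_card (lt_of_le_of_lt hZ hc)
    exact ⟨t, hB ht, hj t ht, htZ⟩
  choose t htT htℓ htZ using ht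
  have htinj : Function.Injective t := fun a b h => by rw [← htℓ a, ← htℓ b, h]
  let J : Finset (ZMod δ) := Finset.univ.filter (fun j => j.val ≠ χ s(p, q))
  have hJ : δ ≤ J.card + 1 := by
    have h1 : (Finset.univ.filter (fun j : ZMod δ => ¬ (j.val ≠ χ s(p, q)))).card ≤ 1 := by
      rw [Finset.card_le_one]
      intro a ha b hb
      simp at ha hb
      exact ZMod.val_injective δ (ha.trans hb.symm)
    have h2 := Finset.card_filter_add_card_filter_not (s := (Finset.univ : Finset (ZMod δ)))
      (fun j : ZMod δ => j.val ≠ χ s(p, q))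
    rw [Finset.card_univ, ZMod.card] at h2
    show δ ≤ (Finset.univ.filter _).card + 1
    omega
  let P := J.image t
  have hPc : P.card = J.card := Finset.card_image_of_injective _ htinj
  have hPδ : P.card ≤ δ := by
    rw [hPc]
    refine (Finset.card_le_univ _).trans ?_
    rw [ZMod.card]
  let Q := (T \ P) \ Z
  have hPT : ∀ w ∈ P, w ∈ T ∧ w ∉ Z := by
    intro w hw
    obtain ⟨j, -, rfl⟩ := Finset.mem_image.1 hw
    exact ⟨htT j, htZ j⟩
  have hQT : ∀ w ∈ Q, w ∈ T ∧ w ∉ Z := by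
    intro w hw
    simp only [Q, Finset.mem_sdiff] at hw
    exact ⟨hw.1.1, hw.2⟩
  have hPQT : ∀ w, (w ∈ P ∨ w ∈ Q) → w ∈ T ∧ w ∉ Z := by
    rintro w (h | h)
    exacts [hPT w h, hQT w h]
  have hQc : Fintype.card W ≤ Q.card := by
    have a1 := Finset.le_card_sdiff P T
    have a2 := Finset.le_card_sdiff Z (T \ P)
    show _ ≤ ((T \ P) \ Z).card
    omega
  -- classification of used edges
  have hclass : ∀ e ∈ UsedEdges p q P Q, (∃ j ∈ J, e = s(p, t j)) ∨
      (e ∈ N ∧ (e = s(p, q) ∨ p ∉ e) ∧ (∀ v ∈ e, v = p ∨ v = q ∨ (v ∈ T ∧ v ∉ Z))) := by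
    rintro e (rfl | ⟨w, hw, rfl⟩ | ⟨w, hw, rfl⟩ | ⟨w, w', hw, hw', hne, rfl⟩)
    · exact Or.inr ⟨h1, Or.inl rfl, by simp⟩
    · obtain ⟨j, hj, rfl⟩ := Finset.mem_image.1 hw
      exact Or.inl ⟨j, hj, rfl⟩
    · have := hPQT w hw
      refine Or.inr ⟨h2 w this.1, Or.inr ?_, ?_⟩
      · simp only [Sym2.mem_iff, not_or]
        exact ⟨hpq, fun h => hpT (h ▸ this.1)⟩
      · simp; tauto
    · have a := hPQT w hw
      have b := hPQT w' hw'
      refine Or.inr ⟨h3 w a.1 w' b.1 hne, Or.inr ?_, ?_⟩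
      · simp only [Sym2.mem_iff, not_or]
        exact ⟨fun h => hpT (h ▸ a.1), fun h => hpT (h ▸ b.1)⟩
      · simp; tauto
  have hcross : ∀ j ∈ J, ∀ e ∈ N, (e = s(p, q) ∨ p ∉ e) →
      (∀ v ∈ e, v = p ∨ v = q ∨ (v ∈ T ∧ v ∉ Z)) → χ s(p, t j) ≠ χ e := by
    intro j hj e he hpe hv heq
    rw [hℓ _ (htT j), htℓ] at heq
    by_cases hepq : e = s(p, q)
    · subst hepq
      exact (Finset.mem_filter.1 hj).2 heq
    · have hpe : p ∉ e := hpe.resolve_left hepq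
      have := (hz j e he hepq heq.symm).resolve_right hpe
      rcases hv _ this with h | h | h
      · exact hzp _ h
      · exact hzq _ h
      · exact h.2 (Finset.mem_image_of_mem _ (Finset.mem_univ _))
  refine copy_of H hxy hpq P Q ?_ (fun h => hpT (hPT _ h).1) (fun h => hpT (hQT _ h).1)
    (fun h => hqT (hPT _ h).1) (fun h => hqT (hQT _ h).1) (by rw [hδ, hPc]; exact hJ) hQc G χ ?_ ?_
  · exact (Finset.disjoint_sdiff (s := P) (t := T)).mono_right Finset.sdiff_subset
  · intro e he
    rcases hclass e he with ⟨j, -, rfl⟩ | ⟨heN, hp, hv⟩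
    · exact g2 _ (htT j)
    · exact g1 e heN (fun v hve => by have := hv v hve; tauto) hp
  · intro e he e' he' heq
    rcases hclass e he with ⟨j, hj, rfl⟩ | ⟨heN, hp, hv⟩ <;>
    rcases hclass e' he' with ⟨j', hj', rfl⟩ | ⟨heN', hp', hv'⟩
    · rw [hℓ _ (htT j), htℓ, hℓ _ (htT j'), htℓ] at heq
      rw [ZMod.val_injective δ heq]
    · exact absurd heq (hcross j hj e' heN' hp' hv')
    · exact absurd heq.symm (hcross j' hj' e heN hp hv)
    · exact hinj heN heN' heq

theorem exists_chi {V : Type*} [Finite V] (S : Set (Sym2 V)) (c : Sym2 V → ℕ) (e : Sym2 V)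
    (he : e ∉ S) (k : ℕ) : ∃ χ : Sym2 V → ℕ, (∀ e ∈ S, χ e = c e) ∧ Set.InjOn χ Sᶜ ∧ χ e = k := by
  classical
  have : Countable V := Finite.to_countable
  have : Countable (Sym2 V) := Quot.mk_surjective.countable
  obtain ⟨g, hg⟩ := exists_injective_nat (Sym2 V)
  refine ⟨fun e' => if e' ∈ S then c e' else Equiv.swap (g e) k (g e'), ?_, ?_, ?_⟩
  · intro e' he'; simp [he']
  · intro a ha b hb hab
    simp only [Set.mem_compl_iff] at ha hb
    simp only [ha, hb, if_false] at hab
    exact hg ((Equiv.swap (g e) k).injective hab)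
  · simp [he]

theorem degree_lower {W V : Type*} [Fintype W] [Fintype V] (H : SimpleGraph W) (δ : ℕ) (hδ2 : 2 ≤ δ)
    (hmin : ∀ a b, H.Adj a b → δ ≤ (H.neighborSet a).ncard)
    (G : SimpleGraph V) (c : Sym2 V → ℕ) (h : RankSat H G c) (hV : δ + 1 ≤ Fintype.card V) (v : V) :
    δ ≤ (G.neighborSet v).ncard := by
  classical
  obtain ⟨r, hr⟩ := h
  by_cases hall : ∀ u, u ≠ v → G.Adj v u
  · have : G.neighborSet v = {v}ᶜ := by
      ext u
      simp only [SimpleGraph.mem_neighborSet, Set.mem_compl_iff, Set.mem_singleton_iff]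
      exact ⟨fun h => h.ne', hall u⟩
    rw [this, Set.ncard_compl, Set.ncard_singleton, Nat.card_eq_fintype_card]
    omega
  by_contra hlt
  push Not at hall hlt
  let S : Finset V := Finset.univ.filter (fun u => u ≠ v ∧ ¬ G.Adj v u)
  have hS : S.Nonempty := by
    obtain ⟨u, hu⟩ := hall
    exact ⟨u, by simpa [S] using hu⟩
  obtain ⟨u, huS, humin⟩ := S.exists_min_image (fun u => r s(v, u)) hS
  have hu : u ≠ v ∧ ¬ G.Adj v u := by simpa [S] using huS
  have heN : s(v, u) ∈ Gᶜ.edgeSet := by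
    simp [SimpleGraph.compl_adj, hu.1.symm, hu.2]
  have heG : s(v, u) ∉ G.edgeSet := hu.2
  -- a target color
  let k : ℕ := if h : (G.neighborSet v).Nonempty then c s(v, h.some) else 0
  obtain ⟨χ, hχ1, hχ2, hχ3⟩ := exists_chi G.edgeSet c s(v, u) heG k
  have hsub : Gᶜ.edgeSet ⊆ (G.edgeSet)ᶜ := by
    intro e he
    induction e with | _ a b => simp at he ⊢; exact he.2
  obtain ⟨f, hf, hadj, hrain, a, b, hab, hfe⟩ := hr χ hχ1 (hχ2.mono hsub) _ heN
  obtain ⟨a, b, hab, hfa, hfb⟩ : ∃ a b, H.Adj a b ∧ f a = v ∧ f b = u := by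
    rcases Sym2.eq_iff.1 hfe with ⟨h1, h2⟩ | ⟨h1, h2⟩
    · exact ⟨a, b, hab, h1.symm, h2.symm⟩
    · exact ⟨b, a, hab.symm, h1.symm, h2.symm⟩
  have himg : f '' (H.neighborSet a) ⊆ insert u (G.neighborSet v) := by
    rintro _ ⟨b', hb', rfl⟩
    have := hadj hb'
    rw [SimpleGraph.sup_adj, SimpleGraph.fromEdgeSet_adj] at this
    rcases this with h | ⟨⟨h1, h2⟩, h3⟩
    · right; rw [hfa] at h; exact h
    · left
      rw [hfa] at h1 h2
      rcases h2 with h2 | h2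
      · have : f b' ∈ S := by
          simp [SimpleGraph.compl_adj] at h1
          simp [S]
          exact ⟨fun h => h1.1 h.symm, h1.2⟩
        have := humin _ this
        omega
      · exact (Sym2.congr_right.1 h2)
  have hcard : (f '' (H.neighborSet a)).ncard = (H.neighborSet a).ncard :=
    Set.ncard_image_of_injective _ hf
  have hle := hmin a b hab
  have hins : (insert u (G.neighborSet v)).ncard ≤ (G.neighborSet v).ncard + 1 := Set.ncard_insert_le _ _
  have heq : f '' (H.neighborSet a) = insert u (G.neighborSet v) :=
    Set.eq_of_subset_of_ncard_le himg (by omega)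
  have hne : (G.neighborSet v).Nonempty := by
    rw [← Set.ncard_pos]
    have := Set.ncard_le_ncard himg
    omega
  have hk : k = c s(v, hne.some) := by simp [k, hne]
  have hw : G.Adj v hne.some := hne.some_mem
  have : hne.some ∈ f '' (H.neighborSet a) := by rw [heq]; exact Or.inr hw
  obtain ⟨b', hb', hfb'⟩ := this
  have := hrain hab hb' (by rw [hfa, hfb, hfb', hχ3, hχ1 _ hw, hk])
  have hbb : b = b' := Sym2.congr_right.1 this
  subst hbb
  rw [hfb] at hfb'
  exact hu.2 (hfb' ▸ hw)

theorem rwsat_lower {W : Type*} [Fintype W] (H : SimpleGraph W) (δ : ℕ) (hδ2 : 2 ≤ δ)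
    (hmin : ∀ a b, H.Adj a b → δ ≤ (H.neighborSet a).ncard) (n : ℕ) (hn : δ + 1 ≤ n) :
    δ * n ≤ 2 * rwsat H n := by
  classical
  obtain ⟨G, c, hR, hc⟩ := rwsat_attained H n
  have hd : ∀ v, δ ≤ G.degree v := by
    intro v
    have := degree_lower H δ hδ2 hmin G c hR (by simpa using hn) v
    rwa [Set.ncard_eq_toFinset_card', ← SimpleGraph.neighborFinset, SimpleGraph.card_neighborFinset_eq_degree] at this
  rw [← hc, Set.ncard_eq_toFinset_card', ← SimpleGraph.edgeFinset, ← SimpleGraph.sum_degrees_eq_twice_card_edges]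
  calc δ * n = ∑ v : Fin n, δ := by simp [mul_comm]
    _ ≤ _ := Finset.sum_le_sum (fun v _ => hd v)

theorem card_Ifin (n a b : ℕ) (hb : b ≤ n) :
    (Finset.univ.filter (fun v : Fin n => a ≤ v.val ∧ v.val < b)).card = b - a := by
  have : (Finset.univ.filter (fun v : Fin n => a ≤ v.val ∧ v.val < b)).image Fin.val
      = Finset.Ico a b := by
    ext k
    simp only [Finset.mem_image, Finset.mem_filter, Finset.mem_univ, true_and, Finset.mem_Ico]
    constructor
    · rintro ⟨v, h, rfl⟩; exact h
    · intro h; exact ⟨⟨k, by omega⟩, h, rfl⟩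
  rw [← Finset.card_image_of_injective _ Fin.val_injective, this, Nat.card_Ico]

/-- The graph of the upper bound construction. -/
def coreGraph (n δ N M : ℕ) : SimpleGraph (Fin n) where
  Adj p q := p ≠ q ∧ (p.val < δ ∨ q.val < δ ∨ (p.val < N ∧ q.val < M) ∨ (q.val < N ∧ p.val < M))
  symm := ⟨fun p q h => ⟨h.1.symm, by tauto⟩⟩
  loopless := ⟨fun p h => h.1 rfl⟩

theorem coreGraph_card (n δ N M : ℕ) (hNM : N ≤ M) (hδ : δ ≤ n) (hM : M ≤ n) :
    (coreGraph n δ N M).edgeSet.ncard ≤ δ * n + M * M := by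
  classical
  let X := (Finset.univ.filter (fun v : Fin n => 0 ≤ v.val ∧ v.val < δ)) ×ˢ (Finset.univ : Finset (Fin n))
  let Y := (Finset.univ.filter (fun v : Fin n => 0 ≤ v.val ∧ v.val < M)) ×ˢ
    (Finset.univ.filter (fun v : Fin n => 0 ≤ v.val ∧ v.val < M))
  have hsub : (coreGraph n δ N M).edgeSet ⊆
      (((X ∪ Y).image (fun p => s(p.1, p.2)) : Finset (Sym2 (Fin n))) : Set (Sym2 (Fin n))) := by
    intro e he
    induction e with | _ a b =>
    obtain ⟨hne, h⟩ := he
    simp only [Finset.coe_image, Set.mem_image, Finset.mem_coe, Finset.mem_union]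
    rcases h with h | h | h | h
    · exact ⟨(a, b), Or.inl (by simp [X, h]), rfl⟩
    · exact ⟨(b, a), Or.inl (by simp [X, h]), Sym2.eq_swap⟩
    · have h' : a.val < N ∧ b.val < M := h
      exact ⟨(a, b), Or.inr (by simp [Y]; omega), rfl⟩
    · have h' : b.val < N ∧ a.val < M := h
      exact ⟨(a, b), Or.inr (by simp [Y]; omega), rfl⟩
  refine (Set.ncard_le_ncard hsub (Finset.finite_toSet _)).trans ?_
  rw [Set.ncard_coe_finset]
  refine Finset.card_image_le.trans ((Finset.card_union_le _ _).trans ?_)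
  rw [Finset.card_product, Finset.card_product, card_Ifin n 0 δ hδ, card_Ifin n 0 M hM]
  simp

theorem coreGraph_sat {W : Type*} [Fintype W] (H : SimpleGraph W) {x y : W}
    (hxy : H.Adj x y) (δ : ℕ) (hδ : (H.neighborSet x).ncard = δ) (n N M : ℕ)
    (hN : N = δ + Fintype.card W + 2) (hM : M = N + δ + Fintype.card W) (hn : M ≤ n)
    (c : Sym2 (Fin n) → ℕ) (hc : Function.Injective c) :
    RankSat H (coreGraph n δ N M) c := by
  classical
  refine ⟨fun e => if ∃ v ∈ e, v.val < M then 0 else 1, ?_⟩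
  intro χ hχ hinj e he
  set G := coreGraph n δ N M with hGdef
  have hadj : ∀ p q : Fin n, G.Adj p q ↔ p ≠ q ∧ (p.val < δ ∨ q.val < δ ∨ (p.val < N ∧ q.val < M) ∨ (q.val < N ∧ p.val < M)) :=
    fun p q => Iff.rfl
  by_cases hr : ∃ v ∈ e, v.val < M
  · obtain ⟨q, hq, hqM⟩ := hr
    obtain ⟨p, rfl⟩ := Sym2.mem_iff_exists.1 hq
    rw [Sym2.eq_swap] at he ⊢
    have he' := he
    rw [SimpleGraph.mem_edgeSet, SimpleGraph.compl_adj, hadj] at he'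
    obtain ⟨hpq, hno⟩ := he'
    have hno := fun h => hno ⟨hpq, h⟩
    have hpN : N ≤ p.val := by by_contra h; exact hno (by omega)
    have hqδ : δ ≤ q.val := by by_contra h; exact hno (by omega)
    have hZ : ∃ Z : Finset (Fin n), Z.card ≤ 1 ∧
        ∀ e ∈ G.edgeSet, c e = χ s(p, q) → ∃ z ∈ e, z ∈ Z ∧ z ≠ p ∧ z ≠ q := by
      by_cases h : ∃ e ∈ G.edgeSet, c e = χ s(p, q)
      · obtain ⟨e, heG, hce⟩ := h
        have : ∃ z ∈ e, z ≠ p ∧ z ≠ q := by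
          by_contra hcon
          push Not at hcon
          induction e with | _ a b =>
          have hab : a ≠ b := G.ne_of_adj heG
          have h1 := hcon a (by simp)
          have h2 := hcon b (by simp)
          have : s(a, b) = s(p, q) := by
            rw [Sym2.eq_iff]
            by_cases hap : a = p
            · left; refine ⟨hap, h2 ?_⟩; rintro rfl; exact hab hap
            · right; refine ⟨h1 hap, ?_⟩
              by_contra hbp
              exact hab ((h1 hap).trans (h2 hbp).symm)
          rw [this] at heG
          exact he.2 heG
        obtain ⟨z, hz, hzp, hzq⟩ := this
        refine ⟨{z}, by simp, ?_⟩
        intro e' he' hce'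
        rw [hc (hce'.trans hce.symm)]
        exact ⟨z, hz, by simp, hzp, hzq⟩
      · exact ⟨∅, by simp, fun e he hce => absurd ⟨e, he, hce⟩ h⟩
    obtain ⟨Z, hZ1, hZ⟩ := hZ
    let P := (Finset.univ.filter (fun v : Fin n => 0 ≤ v.val ∧ v.val < δ)) \ Z
    let Q := ((Finset.univ.filter (fun v : Fin n => δ ≤ v.val ∧ v.val < N)) \ Z).erase q
    have hP : ∀ v ∈ P, v.val < δ ∧ v ∉ Z := by
      intro v hv; simpa [P] using hv
    have hQ : ∀ v ∈ Q, δ ≤ v.val ∧ v.val < N ∧ v ∉ Z ∧ v ≠ q := by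
      intro v hv; simp [Q] at hv; tauto
    have hPQ : ∀ v, (v ∈ P ∨ v ∈ Q) → v.val < N ∧ v ∉ Z ∧ v ≠ q ∧ v ≠ p := by
      rintro v (h | h)
      · have := hP v h
        refine ⟨by omega, this.2, ?_, ?_⟩ <;> rintro rfl <;> omega
      · have := hQ v h
        refine ⟨by omega, this.2.2.1, this.2.2.2, ?_⟩
        rintro rfl; omega
    have hclass : ∀ e ∈ UsedEdges p q P Q, e = s(p, q) ∨
        (e ∈ G.edgeSet ∧ ∀ v ∈ e, v = p ∨ v = q ∨ v ∉ Z) := by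
      rintro e (rfl | ⟨w, hw, rfl⟩ | ⟨w, hw, rfl⟩ | ⟨w, w', hw, hw', hne, rfl⟩)
      · exact Or.inl rfl
      · have a := hP w hw
        have b := hPQ w (Or.inl hw)
        refine Or.inr ⟨?_, by simp; tauto⟩
        rw [SimpleGraph.mem_edgeSet, hadj]
        exact ⟨b.2.2.2.symm, by omega⟩
      · have b := hPQ w hw
        refine Or.inr ⟨?_, by simp; tauto⟩
        rw [SimpleGraph.mem_edgeSet, hadj]
        exact ⟨b.2.2.1.symm, by omega⟩
      · have a := hPQ w hw
        have b := hPQ w' hw'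
        refine Or.inr ⟨?_, by simp; tauto⟩
        rw [SimpleGraph.mem_edgeSet, hadj]
        exact ⟨hne, by omega⟩
    have hcross : ∀ e ∈ G.edgeSet, (∀ v ∈ e, v = p ∨ v = q ∨ v ∉ Z) → χ e ≠ χ s(p, q) := by
      intro e he hv heq
      rw [hχ e he] at heq
      obtain ⟨z, hz, hzZ, hzp, hzq⟩ := hZ e he heq
      have := hv z hz
      tauto
    refine copy_of H hxy hpq P Q ?_ (fun h => (hPQ p (Or.inl h)).2.2.2 rfl)
      (fun h => (hPQ p (Or.inr h)).2.2.2 rfl) (fun h => (hPQ q (Or.inl h)).2.2.1 rfl)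
      (fun h => (hPQ q (Or.inr h)).2.2.1 rfl) ?_ ?_ _ χ ?_ ?_
    · rw [Finset.disjoint_left]
      intro v h1 h2
      have := hP v h1
      have := hQ v h2
      omega
    · have := Finset.le_card_sdiff Z (Finset.univ.filter (fun v : Fin n => 0 ≤ v.val ∧ v.val < δ))
      rw [card_Ifin n 0 δ (by omega)] at this
      rw [hδ]
      show δ ≤ (_ \ Z).card + 1
      omega
    · have h1 := Finset.le_card_sdiff Z (Finset.univ.filter (fun v : Fin n => δ ≤ v.val ∧ v.val < N))
      have h2 := Finset.pred_card_le_card_erase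
        (s := (Finset.univ.filter (fun v : Fin n => δ ≤ v.val ∧ v.val < N)) \ Z) (a := q)
      rw [card_Ifin n δ N (by omega)] at h1
      show _ ≤ (Finset.erase _ q).card
      omega
    · intro e heU
      rw [SimpleGraph.edgeSet_sup, SimpleGraph.edgeSet_fromEdgeSet]
      rcases hclass e heU with rfl | h
      · right
        exact ⟨⟨he, Or.inr rfl⟩, by simpa using hpq⟩
      · left; exact h.1
    · intro e heU e' heU' heq
      rcases hclass e heU with rfl | h <;> rcases hclass e' heU' with rfl | h'
      · rfl
      · exact absurd heq.symm (hcross _ h'.1 h'.2)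
      · exact absurd heq (hcross _ h.1 h.2)
      · rw [hχ _ h.1, hχ _ h'.1] at heq
        exact hc heq
  · induction e with | _ p q =>
    have hpM : M ≤ p.val := by
      by_contra h; exact hr ⟨p, by simp, by omega⟩
    have hqM : M ≤ q.val := by
      by_contra h; exact hr ⟨q, by simp, by omega⟩
    have hpq : p ≠ q := Gᶜ.ne_of_adj he
    let P := Finset.univ.filter (fun v : Fin n => N ≤ v.val ∧ v.val < N + δ)
    let Q := Finset.univ.filter (fun v : Fin n => N + δ ≤ v.val ∧ v.val < M)
    have hPQ : ∀ v, (v ∈ P ∨ v ∈ Q) → N ≤ v.val ∧ v.val < M := by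
      rintro v (h | h)
      · simp [P] at h; omega
      · simp [Q] at h; omega
    have key : ∀ e ∈ UsedEdges p q P Q, e ∈ Gᶜ.edgeSet ∧ ((∃ v ∈ e, v.val < M) ∨ e = s(p, q)) := by
      rintro e (rfl | ⟨w, hw, rfl⟩ | ⟨w, hw, rfl⟩ | ⟨w, w', hw, hw', hne, rfl⟩)
      · exact ⟨he, Or.inr rfl⟩
      · have a := hPQ w (Or.inl hw)
        refine ⟨?_, Or.inl ⟨w, by simp, a.2⟩⟩
        rw [SimpleGraph.mem_edgeSet, SimpleGraph.compl_adj, hadj]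
        refine ⟨?_, by omega⟩
        rintro rfl; omega
      · have a := hPQ w hw
        refine ⟨?_, Or.inl ⟨w, by simp, a.2⟩⟩
        rw [SimpleGraph.mem_edgeSet, SimpleGraph.compl_adj, hadj]
        refine ⟨?_, by omega⟩
        rintro rfl; omega
      · have a := hPQ w hw
        have b := hPQ w' hw'
        refine ⟨?_, Or.inl ⟨w, by simp, a.2⟩⟩
        rw [SimpleGraph.mem_edgeSet, SimpleGraph.compl_adj, hadj]
        exact ⟨hne, by omega⟩
    refine copy_of H hxy hpq P Q ?_ ?_ ?_ ?_ ?_ ?_ ?_ _ χ ?_ ?_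
    · rw [Finset.disjoint_left]
      intro v h1 h2
      simp [P] at h1
      simp [Q] at h2
      omega
    · intro h; have := hPQ p (Or.inl h); omega
    · intro h; have := hPQ p (Or.inr h); omega
    · intro h; have := hPQ q (Or.inl h); omega
    · intro h; have := hPQ q (Or.inr h); omega
    · rw [hδ, card_Ifin n N (N + δ) (by omega)]; omega
    · rw [card_Ifin n (N + δ) M (by omega)]; omega
    · intro e heU
      rw [SimpleGraph.edgeSet_sup, SimpleGraph.edgeSet_fromEdgeSet]
      right
      obtain ⟨h1, h2⟩ := key e heU
      refine ⟨⟨h1, ?_⟩, Gᶜ.not_isDiag_of_mem_edgeSet h1⟩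
      rcases h2 with h2 | h2
      · left
        show (if ∃ v ∈ e, v.val < M then 0 else 1) < (if ∃ v ∈ s(p, q), v.val < M then 0 else 1)
        rw [if_pos h2, if_neg hr]
        exact Nat.zero_lt_one
      · exact Or.inr h2
    · exact hinj.mono (fun e he => (key e he).1)

theorem rwsat_upper {W : Type*} [Fintype W] (H : SimpleGraph W) {x y : W}
    (hxy : H.Adj x y) (δ : ℕ) (hδ : (H.neighborSet x).ncard = δ) :
    ∃ M, ∀ n, M ≤ n → rwsat H n ≤ δ * n + M * M := by
  refine ⟨(δ + Fintype.card W + 2) + δ + Fintype.card W, ?_⟩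
  intro n hn
  have : Countable (Sym2 (Fin n)) := Quot.mk_surjective.countable
  obtain ⟨c, hc⟩ := exists_injective_nat (Sym2 (Fin n))
  have := rwsat_le H _ c (coreGraph_sat H hxy δ hδ n _ _ rfl rfl hn c hc)
  rw [Fintype.card_fin] at this
  exact this.trans (coreGraph_card _ _ _ _ (by omega) (by omega) hn)

theorem exists_low {V : Type*} [Fintype V] (G : SimpleGraph V) (K : ℕ)
    (hK : G.edgeSet.ncard ≤ K * Fintype.card V) (t : ℕ)
    (ht : 2 * (t * (4 * K + 1)) + 1 ≤ Fintype.card V) :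
    ∃ T U : Finset V, T.card = t ∧ T ⊆ U ∧ (∀ s ∈ T, ∀ a, G.Adj s a → a ∈ U) ∧
      (∀ s ∈ T, ∀ s' ∈ T, ¬ G.Adj s s') ∧ U.card ≤ t * (4 * K + 1) := by
  classical
  let Low : Finset V := Finset.univ.filter (fun v => G.degree v ≤ 4 * K)
  let Hi : Finset V := Finset.univ.filter (fun v => ¬ G.degree v ≤ 4 * K)
  have hsum : Low.card + Hi.card = Fintype.card V := by
    rw [← Finset.card_univ]
    exact Finset.card_filter_add_card_filter_not _
  have hHi : Hi.card * (4 * K + 1) ≤ 2 * (K * Fintype.card V) := by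
    have h1 : ∑ v, G.degree v = 2 * G.edgeFinset.card := G.sum_degrees_eq_twice_card_edges
    have h2 : G.edgeFinset.card ≤ K * Fintype.card V := by
      rwa [Set.ncard_eq_toFinset_card', ← SimpleGraph.edgeFinset] at hK
    have h3 : ∑ v ∈ Hi, (4 * K + 1) ≤ ∑ v ∈ Hi, G.degree v := by
      apply Finset.sum_le_sum
      intro v hv
      have := (Finset.mem_filter.1 hv).2
      omega
    have h4 : ∑ v ∈ Hi, G.degree v ≤ ∑ v, G.degree v :=
      Finset.sum_le_sum_of_subset (Finset.subset_univ _)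
    rw [Finset.sum_const, smul_eq_mul] at h3
    omega
  have hLow : Fintype.card V ≤ 2 * Low.card := by
    by_contra hcon
    have : Fintype.card V < 2 * Hi.card := by omega
    nlinarith
  have main : ∀ k, k ≤ t → ∃ T U : Finset V, T.card = k ∧ T ⊆ Low ∧ T ⊆ U ∧
      (∀ s ∈ T, ∀ a, G.Adj s a → a ∈ U) ∧
      (∀ s ∈ T, ∀ s' ∈ T, ¬ G.Adj s s') ∧ U.card ≤ k * (4 * K + 1) := by
    intro k
    induction k with
    | zero => intro _; exact ⟨∅, ∅, by simp⟩
    | succ k ih =>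
      intro hk
      obtain ⟨T, U, h1, h2, h3, h4, h5, h6⟩ := ih (by omega)
      have hUL : U.card < Low.card := by
        have : k * (4 * K + 1) ≤ t * (4 * K + 1) := Nat.mul_le_mul_right _ (by omega)
        omega
      obtain ⟨v, hv, hvU⟩ := Finset.exists_mem_notMem_of_card_lt_card hUL
      have hvT : v ∉ T := fun h => hvU (h3 h)
      refine ⟨insert v T, U ∪ insert v (G.neighborFinset v), ?_, ?_, ?_, ?_, ?_, ?_⟩
      · rw [Finset.card_insert_of_notMem hvT, h1]
      · exact Finset.insert_subset hv h2
      · intro w hw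
        rcases Finset.mem_insert.1 hw with rfl | hw
        · simp
        · simp [h3 hw]
      · intro s hs a hsa
        rcases Finset.mem_insert.1 hs with rfl | hs
        · simp [hsa]
        · simp [h4 s hs a hsa]
      · intro s hs s' hs' hss
        rcases Finset.mem_insert.1 hs with e1 | hs1 <;>
        rcases Finset.mem_insert.1 hs' with e2 | hs2
        · subst e1; subst e2; exact G.irrefl hss
        · subst e1; exact hvU (h4 s' hs2 _ hss.symm)
        · subst e2; exact hvU (h4 s hs1 _ hss)
        · exact h5 s hs1 s' hs2 hss
      · have a1 := Finset.card_union_le U (insert v (G.neighborFinset v))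
        have a2 := Finset.card_insert_le v (G.neighborFinset v)
        have a3 : G.degree v ≤ 4 * K := (Finset.mem_filter.1 hv).2
        rw [SimpleGraph.card_neighborFinset_eq_degree] at a2
        have : (k + 1) * (4 * K + 1) = k * (4 * K + 1) + (4 * K + 1) := by ring
        omega
  obtain ⟨T, U, h1, -, h3, h4, h5, h6⟩ := main t le_rfl
  exact ⟨T, U, h1, h3, h4, h5, h6⟩

theorem exists_label {V : Type*} (δ q : ℕ) [NeZero δ] (T : Finset V) (hT : T.card = δ * q) (hq : δ < q) :
    ∃ ℓ : V → ZMod δ, ∀ j, ∃ B ⊆ T, (∀ t ∈ B, ℓ t = j) ∧ δ < B.card := by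
  classical
  have : Fintype.card T = Fintype.card (ZMod δ × Fin q) := by
    simp [ZMod.card, hT]
  obtain e := Fintype.equivOfCardEq this
  refine ⟨fun v => if h : v ∈ T then (e ⟨v, h⟩).1 else 0, ?_⟩
  intro j
  refine ⟨Finset.univ.image (fun i : Fin q => ((e.symm (j, i) : T) : V)), ?_, ?_, ?_⟩
  · intro v hv
    obtain ⟨i, -, rfl⟩ := Finset.mem_image.1 hv
    exact (e.symm (j, i)).2
  · intro v hv
    obtain ⟨i, -, rfl⟩ := Finset.mem_image.1 hv
    simp
  · rw [Finset.card_image_of_injective]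
    · simpa using hq
    · intro i i' h
      have := e.symm.injective (Subtype.ext h)
      simpa using this

/-- Symmetric function on a disjoint union, from its values on the parts. -/
def sumLift {A B : Type*} (c1 : Sym2 A → ℕ) (c2 : Sym2 B → ℕ) (c3 : A → B → ℕ) :
    Sym2 (A ⊕ B) → ℕ :=
  Sym2.lift ⟨fun u v => match u, v with
    | Sum.inl a, Sum.inl a' => c1 s(a, a')
    | Sum.inr b, Sum.inr b' => c2 s(b, b')
    | Sum.inl a, Sum.inr b => c3 a b
    | Sum.inr b, Sum.inl a => c3 a b, by
      rintro (a | b) (a' | b')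
      · simp [Sym2.eq_swap]
      · rfl
      · rfl
      · simp [Sym2.eq_swap]⟩

/-- Joining two graphs by a complete bipartite graph between `S` and `T`. -/
def joinGraph {A B : Type*} (G1 : SimpleGraph A) (G2 : SimpleGraph B) (S : Finset A) (T : Finset B) :
    SimpleGraph (A ⊕ B) where
  Adj u v := match u, v with
    | Sum.inl a, Sum.inl a' => G1.Adj a a'
    | Sum.inr b, Sum.inr b' => G2.Adj b b'
    | Sum.inl a, Sum.inr b => a ∈ S ∧ b ∈ T
    | Sum.inr b, Sum.inl a => a ∈ S ∧ b ∈ T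
  symm := ⟨by
    rintro (a | b) (a' | b') h
    · exact SimpleGraph.Adj.symm (G := G1) h
    · exact h
    · exact h
    · exact SimpleGraph.Adj.symm (G := G2) h⟩
  loopless := ⟨by
    rintro (a | b) h
    · exact G1.irrefl h
    · exact G2.irrefl h⟩

theorem joinGraph_card {A B : Type*} [Fintype A] [Fintype B] (G1 : SimpleGraph A) (G2 : SimpleGraph B)
    (S : Finset A) (T : Finset B) :
    (joinGraph G1 G2 S T).edgeSet.ncard ≤ G1.edgeSet.ncard + G2.edgeSet.ncard + S.card * T.card := by
  classical
  have hsub : (joinGraph G1 G2 S T).edgeSet ⊆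
      (Sym2.map Sum.inl '' G1.edgeSet ∪ Sym2.map Sum.inr '' G2.edgeSet) ∪
      (((S ×ˢ T).image (fun p => s((Sum.inl p.1 : A ⊕ B), Sum.inr p.2)) :
        Finset (Sym2 (A ⊕ B))) : Set (Sym2 (A ⊕ B))) := by
    intro e he
    induction e with | _ u v =>
    rcases u with a | b <;> rcases v with a' | b'
    · exact Or.inl (Or.inl ⟨s(a, a'), he, rfl⟩)
    · have he : a ∈ S ∧ b' ∈ T := he
      right
      simp only [Finset.coe_image, Set.mem_image, Finset.mem_coe]
      exact ⟨(a, b'), by simp [he], rfl⟩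
    · have he : a' ∈ S ∧ b ∈ T := he
      right
      simp only [Finset.coe_image, Set.mem_image, Finset.mem_coe]
      exact ⟨(a', b), by simp [he], Sym2.eq_swap⟩
    · exact Or.inl (Or.inr ⟨s(b, b'), he, rfl⟩)
  refine (Set.ncard_le_ncard hsub (Set.toFinite _)).trans ?_
  refine (Set.ncard_union_le _ _).trans ?_
  refine add_le_add ((Set.ncard_union_le _ _).trans ?_) ?_
  · rw [Set.ncard_image_of_injective _ (Sym2.map.injective Sum.inl_injective),
      Set.ncard_image_of_injective _ (Sym2.map.injective Sum.inr_injective)]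
  · rw [Set.ncard_coe_finset]
    exact Finset.card_image_le.trans (by rw [Finset.card_product])

theorem join_sat {W A B : Type*} [Fintype W] [Fintype A] [Fintype B] (H : SimpleGraph W) {x y : W}
    (hxy : H.Adj x y) (δ : ℕ) [NeZero δ] (hδ : (H.neighborSet x).ncard = δ)
    (G1 : SimpleGraph A) (c1 : Sym2 A → ℕ) (R1 : RankSat H G1 c1)
    (G2 : SimpleGraph B) (c2 : Sym2 B → ℕ) (R2 : RankSat H G2 c2)
    (S S' : Finset A) (hS : S ⊆ S') (hSa : ∀ s ∈ S, ∀ a, G1.Adj s a → a ∈ S')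
    (hSi : ∀ s ∈ S, ∀ s' ∈ S, ¬ G1.Adj s s')
    (T T' : Finset B) (hT : T ⊆ T') (hTa : ∀ s ∈ T, ∀ a, G2.Adj s a → a ∈ T')
    (hTi : ∀ s ∈ T, ∀ s' ∈ T, ¬ G2.Adj s s')
    (ℓA : A → ZMod δ) (hℓA : ∀ j, ∃ D ⊆ S, (∀ t ∈ D, ℓA t = j) ∧ δ < D.card)
    (ℓB : B → ZMod δ) (hℓB : ∀ j, ∃ D ⊆ T, (∀ t ∈ D, ℓB t = j) ∧ δ < D.card)
    (hSc : Fintype.card W + 2 * δ ≤ S.card) (hTc : Fintype.card W + 2 * δ ≤ T.card) :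
    RankSat H (joinGraph G1 G2 S' T') (sumLift c1 c2 (fun a b => (ℓA a + ℓB b).val)) := by
  classical
  obtain ⟨r1, hr1⟩ := R1
  obtain ⟨r2, hr2⟩ := R2
  obtain ⟨R, hR1, hR2⟩ : ∃ R, (∀ e, r1 e < R) ∧ (∀ e, r2 e < R) := by
    refine ⟨∑ e, r1 e + ∑ e, r2 e + 1, fun e => ?_, fun e => ?_⟩
    · have := Finset.single_le_sum (f := r1) (fun _ _ => Nat.zero_le _) (Finset.mem_univ e)
      omega
    · have := Finset.single_le_sum (f := r2) (fun _ _ => Nat.zero_le _) (Finset.mem_univ e)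
      omega
  set r := sumLift r1 r2 (fun a b => if a ∈ S' ∨ b ∈ T' then R else R + 1) with hr
  refine ⟨r, ?_⟩
  intro χ hχ hinj e he
  set G := joinGraph G1 G2 S' T' with hG
  have nAA : ∀ a a', s((Sum.inl a : A ⊕ B), Sum.inl a') ∈ Gᶜ.edgeSet ↔ s(a, a') ∈ G1ᶜ.edgeSet := by
    intro a a'
    rw [SimpleGraph.mem_edgeSet, SimpleGraph.compl_adj, SimpleGraph.mem_edgeSet, SimpleGraph.compl_adj]
    exact and_congr (by simp) Iff.rfl
  have nBB : ∀ a a', s((Sum.inr a : A ⊕ B), Sum.inr a') ∈ Gᶜ.edgeSet ↔ s(a, a') ∈ G2ᶜ.edgeSet := by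
    intro a a'
    rw [SimpleGraph.mem_edgeSet, SimpleGraph.compl_adj, SimpleGraph.mem_edgeSet, SimpleGraph.compl_adj]
    exact and_congr (by simp) Iff.rfl
  have nAB : ∀ a b, s((Sum.inl a : A ⊕ B), Sum.inr b) ∈ Gᶜ.edgeSet ↔ ¬ (a ∈ S' ∧ b ∈ T') := by
    intro a b
    rw [SimpleGraph.mem_edgeSet, SimpleGraph.compl_adj]
    exact and_iff_right (by simp)
  have rAA : ∀ a a', r s(Sum.inl a, Sum.inl a') = r1 s(a, a') := fun _ _ => rfl
  have rBB : ∀ a a', r s(Sum.inr a, Sum.inr a') = r2 s(a, a') := fun _ _ => rfl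
  have rAB : ∀ a b, r s(Sum.inl a, Sum.inr b) = if a ∈ S' ∨ b ∈ T' then R else R + 1 :=
    fun _ _ => rfl
  have nd : ∀ e ∈ Gᶜ.edgeSet, ¬ e.IsDiag := fun e he => Gᶜ.not_isDiag_of_mem_edgeSet he
  -- membership in the current graph
  have cur : ∀ e0 e : Sym2 (A ⊕ B), e0 ∈ Gᶜ.edgeSet → (r e0 < r e ∨ e0 = e) →
      e0 ∈ (G ⊔ SimpleGraph.fromEdgeSet {e' | e' ∈ Gᶜ.edgeSet ∧ (r e' < r e ∨ e' = e)}).edgeSet := by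
    intro e0 e h1 h2
    rw [SimpleGraph.edgeSet_sup, SimpleGraph.edgeSet_fromEdgeSet]
    exact Or.inr ⟨⟨h1, h2⟩, nd _ h1⟩
  -- edges inside the parts
  have partA : ∀ e : Sym2 A, e ∈ G1ᶜ.edgeSet →
      IsRainbowCopyThrough H (G ⊔ SimpleGraph.fromEdgeSet
        {e' | e' ∈ Gᶜ.edgeSet ∧ (r e' < r (e.map Sum.inl) ∨ e' = e.map Sum.inl)}) χ (e.map Sum.inl) := by
    intro e he
    have := hr1 (fun e => χ (e.map Sum.inl)) (by
      intro e he
      induction e with | _ a a' => exact hχ s(Sum.inl a, Sum.inl a') he) (by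
      intro e he e' he' heq
      induction e with | _ a a' =>
      induction e' with | _ b b' =>
      exact Sym2.map.injective Sum.inl_injective (hinj ((nAA a a').2 he) ((nAA b b').2 he') heq)) e he
    refine copy_map Sum.inl Sum.inl_injective ?_ (fun _ _ => rfl) this
    intro a b hab
    rw [SimpleGraph.sup_adj, SimpleGraph.fromEdgeSet_adj] at hab
    rcases hab with hab | ⟨⟨h1, h2⟩, h3⟩
    · exact Or.inl hab
    · refine cur _ _ ((nAA a b).2 h1) ?_
      rcases h2 with h2 | h2
      · left
        induction e with | _ u v => exact h2
      · right; rw [← h2]; rfl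
  have partB : ∀ e : Sym2 B, e ∈ G2ᶜ.edgeSet →
      IsRainbowCopyThrough H (G ⊔ SimpleGraph.fromEdgeSet
        {e' | e' ∈ Gᶜ.edgeSet ∧ (r e' < r (e.map Sum.inr) ∨ e' = e.map Sum.inr)}) χ (e.map Sum.inr) := by
    intro e he
    have := hr2 (fun e => χ (e.map Sum.inr)) (by
      intro e he
      induction e with | _ a a' => exact hχ s(Sum.inr a, Sum.inr a') he) (by
      intro e he e' he' heq
      induction e with | _ a a' =>
      induction e' with | _ b b' =>
      exact Sym2.map.injective Sum.inr_injective (hinj ((nBB a a').2 he) ((nBB b b').2 he') heq)) e he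
    refine copy_map Sum.inr Sum.inr_injective ?_ (fun _ _ => rfl) this
    intro a b hab
    rw [SimpleGraph.sup_adj, SimpleGraph.fromEdgeSet_adj] at hab
    rcases hab with hab | ⟨⟨h1, h2⟩, h3⟩
    · exact Or.inl hab
    · refine cur _ _ ((nBB a b).2 h1) ?_
      rcases h2 with h2 | h2
      · left
        induction e with | _ u v => exact h2
      · right; rw [← h2]; rfl
  -- cross edges
  have cross : ∀ (a : A) (b : B), ¬ (a ∈ S' ∧ b ∈ T') →
      IsRainbowCopyThrough H (G ⊔ SimpleGraph.fromEdgeSet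
        {e' | e' ∈ Gᶜ.edgeSet ∧ (r e' < r s(Sum.inl a, Sum.inr b) ∨ e' = s(Sum.inl a, Sum.inr b))}) χ
        s(Sum.inl a, Sum.inr b) := by
    intro a b hab
    by_cases ha : a ∈ S'
    · have hb : b ∉ T' := fun h => hab ⟨ha, h⟩
      refine copy_step H hxy δ hδ _ χ Gᶜ.edgeSet nd hinj (p := Sum.inl a) (q := Sum.inr b) (by simp)
        (T.map Function.Embedding.inr) (by simp) (by simpa using fun h => hb (hT h))
        (Sum.elim (fun _ => 0) (fun t => ℓA a + ℓB t)) ?_ ?_ (by simpa using hTc)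
        ((nAB a b).2 hab) ?_ ?_ ?_ ?_
      · intro t0 ht0
        obtain ⟨t, ht, rfl⟩ := Finset.mem_map.1 ht0
        exact hχ s(Sum.inl a, Sum.inr t) (show a ∈ S' ∧ t ∈ T' from ⟨ha, hT ht⟩)
      · intro j
        obtain ⟨D, hD, hj, hc⟩ := hℓB (j - ℓA a)
        refine ⟨D.map Function.Embedding.inr, Finset.map_subset_map.2 hD, ?_, by simpa using hc⟩
        intro t0 ht0
        obtain ⟨t, ht, rfl⟩ := Finset.mem_map.1 ht0
        simp [hj t ht]
      · intro t0 ht0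
        obtain ⟨t, ht, rfl⟩ := Finset.mem_map.1 ht0
        refine (nBB b t).2 ?_
        rw [SimpleGraph.mem_edgeSet, SimpleGraph.compl_adj]
        exact ⟨fun h => hb (h ▸ hT ht), fun h => hb (hTa t ht b h.symm)⟩
      · intro t0 ht0 t1 ht1 hne
        obtain ⟨t, ht, rfl⟩ := Finset.mem_map.1 ht0
        obtain ⟨t', ht', rfl⟩ := Finset.mem_map.1 ht1
        refine (nBB t t').2 ?_
        rw [SimpleGraph.mem_edgeSet, SimpleGraph.compl_adj]
        exact ⟨fun h => hne (h ▸ rfl), hTi t ht t' ht'⟩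
      · intro e heN hv hpe
        refine cur _ _ heN ?_
        by_cases hee : e = s(Sum.inl a, Sum.inr b)
        · exact Or.inr hee
        left
        have hpe := hpe.resolve_left hee
        have hv' : ∀ v ∈ e, ∃ t, v = Sum.inr t := by
          intro v hve
          rcases hv v hve with rfl | rfl | h
          · exact absurd hve hpe
          · exact ⟨_, rfl⟩
          · obtain ⟨t, -, rfl⟩ := Finset.mem_map.1 h
            exact ⟨t, rfl⟩
        induction e with | _ u v =>
        obtain ⟨t, rfl⟩ := hv' u (by simp)
        obtain ⟨t', rfl⟩ := hv' v (by simp)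
        rw [rBB, rAB, if_pos (Or.inl ha)]
        exact hR2 _
      · intro t0 ht0
        obtain ⟨t, ht, rfl⟩ := Finset.mem_map.1 ht0
        exact Or.inl (show a ∈ S' ∧ t ∈ T' from ⟨ha, hT ht⟩)
    by_cases hb : b ∈ T'
    · rw [Sym2.eq_swap]
      refine copy_step H hxy δ hδ _ χ Gᶜ.edgeSet nd hinj (p := Sum.inr b) (q := Sum.inl a) (by simp)
        (S.map Function.Embedding.inl) (by simp) (by simpa using fun h => ha (hS h))
        (Sum.elim (fun t => ℓA t + ℓB b) (fun _ => 0)) ?_ ?_ (by simpa using hSc)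
        (by rw [Sym2.eq_swap]; exact (nAB a b).2 hab) ?_ ?_ ?_ ?_
      · intro t0 ht0
        obtain ⟨t, ht, rfl⟩ := Finset.mem_map.1 ht0
        exact hχ s(Sum.inr b, Sum.inl t) (show t ∈ S' ∧ b ∈ T' from ⟨hS ht, hb⟩)
      · intro j
        obtain ⟨D, hD, hj, hc⟩ := hℓA (j - ℓB b)
        refine ⟨D.map Function.Embedding.inl, Finset.map_subset_map.2 hD, ?_, by simpa using hc⟩
        intro t0 ht0
        obtain ⟨t, ht, rfl⟩ := Finset.mem_map.1 ht0
        simp [hj t ht]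
      · intro t0 ht0
        obtain ⟨t, ht, rfl⟩ := Finset.mem_map.1 ht0
        refine (nAA a t).2 ?_
        rw [SimpleGraph.mem_edgeSet, SimpleGraph.compl_adj]
        exact ⟨fun h => ha (h ▸ hS ht), fun h => ha (hSa t ht a h.symm)⟩
      · intro t0 ht0 t1 ht1 hne
        obtain ⟨t, ht, rfl⟩ := Finset.mem_map.1 ht0
        obtain ⟨t', ht', rfl⟩ := Finset.mem_map.1 ht1
        refine (nAA t t').2 ?_
        rw [SimpleGraph.mem_edgeSet, SimpleGraph.compl_adj]
        exact ⟨fun h => hne (h ▸ rfl), hSi t ht t' ht'⟩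
      · intro e heN hv hpe
        refine cur _ _ heN ?_
        by_cases hee : e = s(Sum.inr b, Sum.inl a)
        · exact Or.inr hee
        left
        have hpe := hpe.resolve_left hee
        have hv' : ∀ v ∈ e, ∃ t, v = Sum.inl t := by
          intro v hve
          rcases hv v hve with rfl | rfl | h
          · exact absurd hve hpe
          · exact ⟨_, rfl⟩
          · obtain ⟨t, -, rfl⟩ := Finset.mem_map.1 h
            exact ⟨t, rfl⟩
        induction e with | _ u v =>
        obtain ⟨t, rfl⟩ := hv' u (by simp)
        obtain ⟨t', rfl⟩ := hv' v (by simp)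
        rw [rAA, Sym2.eq_swap (a := Sum.inr b), rAB, if_pos (Or.inr hb)]
        exact hR1 _
      · intro t0 ht0
        obtain ⟨t, ht, rfl⟩ := Finset.mem_map.1 ht0
        exact Or.inl (show t ∈ S' ∧ b ∈ T' from ⟨hS ht, hb⟩)
    · -- everything is adversarial
      obtain ⟨P0, hP0, hP0c⟩ := Finset.exists_subset_card_eq (s := S) (n := δ) (by omega)
      have hrab : r s(Sum.inl a, Sum.inr b) = R + 1 := by rw [rAB, if_neg (by tauto)]
      have hsub : ∀ w : A ⊕ B, (w ∈ P0.map Function.Embedding.inl ∨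
          w ∈ (S \ P0).map Function.Embedding.inl) → ∃ s ∈ S, w = Sum.inl s := by
        rintro w (h | h)
        · obtain ⟨t, ht, rfl⟩ := Finset.mem_map.1 h
          exact ⟨t, hP0 ht, rfl⟩
        · obtain ⟨t, ht, rfl⟩ := Finset.mem_map.1 h
          exact ⟨t, (Finset.mem_sdiff.1 ht).1, rfl⟩
      have key : ∀ e ∈ UsedEdges (Sum.inl a : A ⊕ B) (Sum.inr b) (P0.map Function.Embedding.inl)
          ((S \ P0).map Function.Embedding.inl), e ∈ Gᶜ.edgeSet ∧
          (r e < r s(Sum.inl a, Sum.inr b) ∨ e = s(Sum.inl a, Sum.inr b)) := by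
        rw [hrab]
        rintro e (rfl | ⟨w, hw, rfl⟩ | ⟨w, hw, rfl⟩ | ⟨w, w', hw, hw', hne, rfl⟩)
        · exact ⟨(nAB a b).2 hab, Or.inr rfl⟩
        · obtain ⟨s, hs, rfl⟩ := hsub w (Or.inl hw)
          refine ⟨(nAA a s).2 ?_, Or.inl ?_⟩
          · rw [SimpleGraph.mem_edgeSet, SimpleGraph.compl_adj]
            exact ⟨fun h => ha (h ▸ hS hs), fun h => ha (hSa s hs a h.symm)⟩
          · rw [rAA]; have := hR1 s(a, s); omega
        · obtain ⟨s, hs, rfl⟩ := hsub w hw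
          rw [Sym2.eq_swap]
          refine ⟨(nAB s b).2 (by tauto), Or.inl ?_⟩
          rw [rAB, if_pos (Or.inl (hS hs))]; omega
        · obtain ⟨s, hs, rfl⟩ := hsub w hw
          obtain ⟨s', hs', rfl⟩ := hsub w' hw'
          refine ⟨(nAA s s').2 ?_, Or.inl ?_⟩
          · rw [SimpleGraph.mem_edgeSet, SimpleGraph.compl_adj]
            exact ⟨fun h => hne (h ▸ rfl), hSi s hs s' hs'⟩
          · rw [rAA]; have := hR1 s(s, s'); omega
      refine copy_of H hxy (by simp) (P0.map Function.Embedding.inl)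
        ((S \ P0).map Function.Embedding.inl) ?_ ?_ ?_ ?_ ?_ ?_ ?_ _ χ ?_ ?_
      · rw [Finset.disjoint_map]
        exact Finset.disjoint_sdiff
      · simpa using fun h => ha (hS (hP0 h))
      · simpa using fun h => absurd (hS h) ha
      · simp
      · simp
      · rw [hδ, Finset.card_map, hP0c]; omega
      · have := Finset.le_card_sdiff P0 S
        rw [Finset.card_map]; omega
      · intro e he
        exact cur _ _ (key e he).1 (key e he).2
      · exact hinj.mono (fun e he => (key e he).1)
  induction e with | _ u v =>
  rcases u with a | b <;> rcases v with a' | b'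
  · exact partA s(a, a') ((nAA _ _).1 he)
  · exact cross a b' ((nAB _ _).1 he)
  · rw [Sym2.eq_swap] at he ⊢
    exact cross a' b ((nAB _ _).1 he)
  · exact partB s(b, b') ((nBB _ _).1 he)

theorem rwsat_subadd {W : Type*} [Fintype W] (H : SimpleGraph W) {x y : W}
    (hxy : H.Adj x y) (δ : ℕ) [NeZero δ] (hδ : (H.neighborSet x).ncard = δ) :
    ∃ N0 C, 1 ≤ N0 ∧ ∀ n m, N0 ≤ n → N0 ≤ m → rwsat H (n + m) ≤ rwsat H n + rwsat H m + C := by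
  obtain ⟨M, hM⟩ := rwsat_upper H hxy δ hδ
  have hδ0 : 1 ≤ δ := NeZero.one_le
  let K := δ + 1
  let q := δ + Fintype.card W + 2
  let t := δ * q
  let D := t * (4 * K + 1)
  have ht : Fintype.card W + 2 * δ ≤ t := by
    show _ ≤ δ * (δ + Fintype.card W + 2)
    nlinarith
  refine ⟨2 * D + 1 + M + M * M, D * D, by omega, ?_⟩
  have main : ∀ n, 2 * D + 1 + M + M * M ≤ n → ∃ (G : SimpleGraph (Fin n)) (c : Sym2 (Fin n) → ℕ)
      (T U : Finset (Fin n)) (ℓ : Fin n → ZMod δ),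
      RankSat H G c ∧ G.edgeSet.ncard = rwsat H n ∧ T.card = t ∧ T ⊆ U ∧
      (∀ s ∈ T, ∀ a, G.Adj s a → a ∈ U) ∧ (∀ s ∈ T, ∀ s' ∈ T, ¬ G.Adj s s') ∧ U.card ≤ D ∧
      ∀ j, ∃ B ⊆ T, (∀ t ∈ B, ℓ t = j) ∧ δ < B.card := by
    intro n hn
    obtain ⟨G, c, hR, hc⟩ := rwsat_attained H n
    have hup := hM n (by omega)
    obtain ⟨T, U, h1, h2, h3, h4, h5⟩ := exists_low G K (by
      rw [hc, Fintype.card_fin]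
      show _ ≤ (δ + 1) * n
      have : (δ + 1) * n = δ * n + n := by ring
      omega) t (by rw [Fintype.card_fin]; show 2 * D + 1 ≤ n; omega)
    obtain ⟨ℓ, hℓ⟩ := exists_label δ q T h1 (by show δ < δ + Fintype.card W + 2; omega)
    exact ⟨G, c, T, U, ℓ, hR, hc, h1, h2, h3, h4, h5, hℓ⟩
  intro n m hn hm
  obtain ⟨G1, c1, S, S', ℓA, a1, a2, a3, a4, a5, a6, a7, a8⟩ := main n hn
  obtain ⟨G2, c2, T, T', ℓB, b1, b2, b3, b4, b5, b6, b7, b8⟩ := main m hm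
  have := rwsat_le H _ _ (join_sat H hxy δ hδ G1 c1 a1 G2 c2 b1 S S' a4 a5 a6 T T' b4 b5 b6 ℓA a8 ℓB b8
    (by omega) (by omega))
  rw [Fintype.card_sum, Fintype.card_fin, Fintype.card_fin] at this
  refine this.trans ((joinGraph_card _ _ _ _).trans ?_)
  rw [a2, b2]
  exact Nat.add_le_add_left (Nat.mul_le_mul a7 b7) _

theorem tendsto_of_subadd (f : ℕ → ℕ) (N C : ℕ) (hN : 1 ≤ N)
    (h : ∀ n m, N ≤ n → N ≤ m → f (n + m) ≤ f n + f m + C) :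
    ∃ L : ℝ, Filter.Tendsto (fun n : ℕ => (f n : ℝ) / n) Filter.atTop (nhds L) := by
  let u : ℕ → ℝ := fun k => if k = 0 then 0 else f (k * N) + C
  have hu : Subadditive u := by
    intro a b
    by_cases ha : a = 0
    · simp [u, ha]
    by_cases hb : b = 0
    · simp [u, hb]
    have hab : a + b ≠ 0 := by omega
    simp only [u, ha, hb, hab, if_false]
    have := h (a * N) (b * N) (Nat.le_mul_of_pos_left _ (by omega)) (Nat.le_mul_of_pos_left _ (by omega))
    rw [← add_mul] at this
    have : (f ((a + b) * N) : ℝ) ≤ f (a * N) + f (b * N) + C := by exact_mod_cast this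
    linarith
  have hbdd : BddBelow (Set.range fun n => u n / n) := by
    refine ⟨0, ?_⟩
    rintro _ ⟨n, rfl⟩
    simp only [u]
    split_ifs <;> positivity
  have hlim := hu.tendsto_lim hbdd
  set l := hu.lim with hl
  -- bounded remainder
  obtain ⟨K, hK⟩ : ∃ K : ℕ, ∀ r, r < 2 * N + 1 → f r ≤ K := by
    refine ⟨∑ r ∈ Finset.range (2 * N + 1), f r, fun r hr => ?_⟩
    exact Finset.single_le_sum (f := f) (fun _ _ => Nat.zero_le _) (Finset.mem_range.2 hr)
  have hN0 : (0 : ℝ) < N := by exact_mod_cast hN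
  have hdiv : Filter.Tendsto (fun n : ℕ => n / N) Filter.atTop Filter.atTop :=
    Nat.tendsto_div_const_atTop (by omega)
  -- upper comparison
  have hup : ∀ n, 2 * N ≤ n → (f n : ℝ) ≤ u (n / N - 1) + K := by
    intro n hn
    have h2 : 2 ≤ n / N := by rw [Nat.le_div_iff_mul_le (by omega)]; omega
    have hmod := Nat.div_add_mod n N
    have hlt := Nat.mod_lt n (show 0 < N by omega)
    obtain ⟨k, hk⟩ : ∃ k, n / N = k + 1 := ⟨n / N - 1, by omega⟩
    rw [hk] at hmod ⊢
    have hexp : N * (k + 1) = k * N + N := by ring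
    have hkN : N ≤ k * N := Nat.le_mul_of_pos_left _ (by omega)
    have := h (k * N) (N + n % N) hkN (by omega)
    have e : k * N + (N + n % N) = n := by omega
    rw [e] at this
    have h3 := hK (N + n % N) (by omega)
    have hk0 : k ≠ 0 := by omega
    simp only [u, Nat.add_sub_cancel, hk0, if_false]
    have : f n ≤ f (k * N) + C + K := by omega
    exact_mod_cast this
  have hlow : ∀ n, 2 * N ≤ n → u (n / N + 2) - 2 * C - K ≤ (f n : ℝ) := by
    intro n hn
    have hmod := Nat.div_add_mod n N
    have hlt := Nat.mod_lt n (show 0 < N by omega)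
    set k := n / N with hk
    have hexp : (k + 2) * N = N * k + 2 * N := by ring
    have := h n (2 * N - n % N) (by omega) (by omega)
    have e : n + (2 * N - n % N) = (k + 2) * N := by omega
    rw [e] at this
    have h3 := hK (2 * N - n % N) (by omega)
    have hk0 : k + 2 ≠ 0 := Nat.succ_ne_zero _
    have h7 : f ((k + 2) * N) ≤ f n + K + C := by omega
    have h8 : (f ((k + 2) * N) : ℝ) ≤ f n + K + C := by exact_mod_cast h7
    simp only [u, hk0, if_false]
    linarith
  have hone : Filter.Tendsto (fun n : ℕ => (1 : ℝ) / n) Filter.atTop (nhds 0) :=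
    tendsto_one_div_atTop_nhds_zero_nat
  have hconst : ∀ a : ℝ, Filter.Tendsto (fun n : ℕ => a / n) Filter.atTop (nhds 0) :=
    fun a => tendsto_const_div_atTop_nhds_zero_nat a
  have hratio : Filter.Tendsto (fun n : ℕ => ((n / N : ℕ) : ℝ) / n) Filter.atTop (nhds (1 / N)) := by
    have h1 : Filter.Tendsto (fun n : ℕ => (1 : ℝ) / N - 1 / n) Filter.atTop (nhds (1 / N)) := by
      simpa using (tendsto_const_nhds (x := (1 : ℝ) / N)).sub hone
    refine tendsto_of_tendsto_of_tendsto_of_le_of_le' h1 tendsto_const_nhds ?_ ?_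
    · filter_upwards [Filter.eventually_gt_atTop 0] with n hn
      have hn0 : (0 : ℝ) < n := by exact_mod_cast hn
      have h2 : n < N * (n / N) + N := by
        have hmod := Nat.div_add_mod n N
        have hlt := Nat.mod_lt n (show 0 < N by omega)
        omega
      have h3 : (n : ℝ) < N * (n / N : ℕ) + N := by exact_mod_cast h2
      rw [div_sub_div _ _ hN0.ne' hn0.ne', div_le_div_iff₀ (by positivity) hn0]
      nlinarith
    · filter_upwards [Filter.eventually_gt_atTop 0] with n hn
      have hn0 : (0 : ℝ) < n := by exact_mod_cast hn
      have h2 : (N : ℝ) * (n / N : ℕ) ≤ n := by exact_mod_cast Nat.mul_div_le n N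
      rw [div_le_div_iff₀ hn0 hN0]
      linarith
  have hgen : ∀ g : ℕ → ℕ, Filter.Tendsto g Filter.atTop Filter.atTop →
      Filter.Tendsto (fun n : ℕ => (g n : ℝ) / n) Filter.atTop (nhds (1 / N)) →
      Filter.Tendsto (fun n : ℕ => u (g n) / n) Filter.atTop (nhds (l * (1 / N))) := by
    intro g hg1 hg2
    refine ((hlim.comp hg1).mul hg2).congr' ?_
    filter_upwards [hg1.eventually_gt_atTop 0] with n hn
    have hn0 : (0 : ℝ) < g n := by exact_mod_cast hn
    simp only [Function.comp]
    field_simp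
  have hA := hgen (fun n => n / N + 2) ((Filter.tendsto_add_atTop_nat 2).comp hdiv) (by
    have := hratio.add (hconst 2)
    rw [add_zero] at this
    refine this.congr ?_
    intro n
    push_cast
    ring)
  have hB := hgen (fun n => n / N - 1) ((Filter.tendsto_sub_atTop_nat 1).comp hdiv) (by
    have := hratio.sub (hconst 1)
    rw [sub_zero] at this
    refine this.congr' ?_
    filter_upwards [hdiv.eventually_ge_atTop 1] with n hn
    rw [Nat.cast_sub hn]
    push_cast
    ring)
  refine ⟨l * (1 / N), ?_⟩
  have hA2 := hA.sub (hconst (2 * C + K))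
  have hB2 := hB.add (hconst K)
  rw [sub_zero] at hA2
  rw [add_zero] at hB2
  refine tendsto_of_tendsto_of_tendsto_of_le_of_le' hA2 hB2 ?_ ?_
  · filter_upwards [Filter.eventually_ge_atTop (2 * N)] with n hn
    rw [← sub_div]
    exact div_le_div_of_nonneg_right (by linarith [hlow n hn]) (Nat.cast_nonneg _)
  · filter_upwards [Filter.eventually_ge_atTop (2 * N)] with n hn
    rw [← add_div]
    exact div_le_div_of_nonneg_right (hup n hn) (Nat.cast_nonneg _)

end Helpers

/-- If the non-empty graph `H` contains no pendant edge, then the limit `L` of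
`rwsat(n, H) / n` satisfies `δ'(H) / 2 ≤ L ≤ δ'(H)`. -/
theorem rwsat_limit_bounds_of_no_pendant {W : Type*} [Fintype W] (H : SimpleGraph W)
    (hH : H.edgeSet.Nonempty)
    (hpend : ∀ u v, H.Adj u v → (H.neighborSet v).ncard ≠ 1) :
    ∃ L : ℝ, Filter.Tendsto (fun n : ℕ => (rwsat H n : ℝ) / n) Filter.atTop (nhds L) ∧
      (minPosDeg H : ℝ) / 2 ≤ L ∧ L ≤ (minPosDeg H : ℝ) := by
  obtain ⟨e, he⟩ := hH
  have hmem : minPosDeg H ∈ {d | ∃ v, (H.neighborSet v).ncard = d ∧ d ≠ 0} := by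
    apply Nat.sInf_mem
    induction e with | _ a b =>
    exact ⟨_, a, rfl, (Set.ncard_pos (Set.toFinite _)).2 ⟨b, he⟩ |>.ne'⟩
  have hmin : ∀ a b, H.Adj a b → minPosDeg H ≤ (H.neighborSet a).ncard := by
    intro a b hab
    exact Nat.sInf_le ⟨a, rfl, (Set.ncard_pos (Set.toFinite _)).2 ⟨b, hab⟩ |>.ne'⟩
  generalize minPosDeg H = δ at *
  obtain ⟨x, hx, hδ0⟩ := hmem
  obtain ⟨y, hxy⟩ : (H.neighborSet x).Nonempty :=
    (Set.ncard_pos (Set.toFinite _)).1 (by omega)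
  have hxy : H.Adj x y := hxy
  have hδ1 := hpend y x hxy.symm
  have : NeZero δ := ⟨hδ0⟩
  obtain ⟨N0, C, hN0, hsub⟩ := rwsat_subadd H hxy δ hx
  obtain ⟨L, hL⟩ := tendsto_of_subadd (rwsat H) N0 C hN0 hsub
  refine ⟨L, hL, ?_, ?_⟩
  · refine ge_of_tendsto hL ?_
    filter_upwards [Filter.eventually_ge_atTop (δ + 1)] with n hn
    have h1 := rwsat_lower H δ (by omega) hmin n hn
    have h2 : (δ : ℝ) * n ≤ 2 * rwsat H n := by exact_mod_cast h1
    have hn0 : (0 : ℝ) < n := by exact_mod_cast (by omega : 0 < n)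
    rw [div_le_div_iff₀ (by norm_num) hn0]
    linarith
  · obtain ⟨M, hM⟩ := rwsat_upper H hxy δ hx
    have h1 : Filter.Tendsto (fun n : ℕ => (δ : ℝ) + (M * M : ℝ) / n) Filter.atTop (nhds (δ : ℝ)) := by
      simpa using (tendsto_const_nhds (x := (δ : ℝ))).add
        (tendsto_const_div_atTop_nhds_zero_nat ((M : ℝ) * M))
    refine le_of_tendsto_of_tendsto hL h1 ?_
    filter_upwards [Filter.eventually_ge_atTop (M + 1)] with n hn
    have h2 : (rwsat H n : ℝ) ≤ δ * n + M * M := by exact_mod_cast hM n (by omega)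
    have hn0 : (0 : ℝ) < n := by exact_mod_cast (by omega : 0 < n)
    rw [div_le_iff₀ hn0, add_mul, div_mul_cancel₀ _ hn0.ne']
    exact h2
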